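/- Let γ ≥ 1 and n ≥ 4 be integers with n ∈ {3γ − 1, 3γ, 3γ + 1}. For every connected nonbipartite graph G of order n with domination number γ, one has q_min(C*_{3,n−4}) ≤ q_min(G), where C*_{3,n−4} has order n, and equality holds if and only if G is isomorphic to C*_{3,n−4}. -/

import Mathlib

open scoped Classical

/-- `D` is a dominating set of `G`: every vertex not in `D` is adjacent to a vertex of `D`. -/
def IsDominatingSet {V : Type*} [Fintype V] (G : SimpleGraph V) (D : Finset V) : Prop :=
  ∀ v, v ∉ D → ∃ u ∈ D, G.Adj u v

/-- The domination number of `G`: minimum cardinality of a dominating set. -/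
noncomputable def dominationNumber {V : Type*} [Fintype V] (G : SimpleGraph V) : ℕ :=
  sInf {k | ∃ D : Finset V, IsDominatingSet G D ∧ D.card = k}

/-- Edge relation for the graph `C*_{s,l}` on vertex indices `0, …, n-1`:
vertices `0, …, s-1` form a cycle `C_s` (with `0` playing the role of `v_1`);
vertices `0, s, s+1, …, s+l-1` form a path of length `l` hanging at `0`;
and all remaining vertices `s+l, …, n-1` are pendant vertices attached to the
other end of the path (to `0` itself when `l = 0`). -/
def cstarRel (s l : ℕ) (a b : ℕ) : Prop :=
  (b = a + 1 ∧ a + 1 < s) ∨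
  (a = 0 ∧ b = s - 1) ∨
  (1 ≤ l ∧ a = 0 ∧ b = s) ∨
  (b = a + 1 ∧ s ≤ a ∧ a + 1 < s + l) ∨
  (a = (if l = 0 then 0 else s + l - 1) ∧ s + l ≤ b)

/-- The graph `C*_{s,l}` of order `n`: a cycle `C_s` with a path of length `l`
attached, and `n - s - l` pendant edges attached at the far end of the path. -/
def Cstar (n s l : ℕ) : SimpleGraph (Fin n) :=
  SimpleGraph.fromRel (fun i j => cstarRel s l i.val j.val)

/-- The signless Laplacian matrix `Q(G) = D(G) + A(G)` of a finite simple graph. -/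
noncomputable def signlessLaplacian {V : Type*} [Fintype V] (G : SimpleGraph V) :
    Matrix V V ℝ :=
  fun i j => (if i = j then (G.degree i : ℝ) else 0) + (if G.Adj i j then 1 else 0)

/-- The least eigenvalue of the signless Laplacian of `G`. -/
noncomputable def qmin {V : Type*} [Fintype V] (G : SimpleGraph V) : ℝ :=
  sInf {μ : ℝ | ∃ x : V → ℝ, x ≠ 0 ∧ (signlessLaplacian G).mulVec x = μ • x}

/-!
Number the vertices so that the absolute values `y` of a least eigenvector `x` increase. An edge
`ij` contributes `(x i + x j)² ≥ (y j - y i)²` to the quadratic form of `Q(G)`, and a connected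
graph crosses every cut `{0, …, k} | {k + 1, …}`, so its Dirichlet energy at `y` is at least that of
the path `0, 1, 2, …`. As `G` is not bipartite, some edge `rs` on a cycle has `x r * x s ≥ 0`. The
rest of `G` is still connected and pays for the path, while `rs` pays for the two remaining terms
`(y 2 - y 0)² + 4 * y 0 * y 1` of a triangle on `0, 1, 2`; if `rs` is the edge `01`, a second cycle
edge at `0` is used for the first of them. The outcome is the quadratic form of `C*_{3,n-4}` at `y`
with alternating signs, which is at least `q_min(C*_{3,n-4})` times `y ⬝ y`.

If the two least eigenvalues agree, the alternating `y` is an eigenvector for `C*_{3,n-4}`, and its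
eigenvalue equation forces `y 1 < y 2 < ⋯`. Then no edge of `G` other than `02` can skip a path
vertex, so `G` is contained in `C*_{3,n-4}`. The latter has only `n` edges, and `G` has at least as
many since it is connected and not a tree.
-/

open Matrix

section AbsoluteValues

variable {ι R : Type*} [Fintype ι] [Ring R] [LinearOrder R]

lemma abs_dotProduct_abs [IsOrderedRing R] (x : ι → R) : |x| ⬝ᵥ |x| = x ⬝ᵥ x := by
  simp only [dotProduct, Pi.abs_apply, abs_mul_abs_self]

lemma dotProduct_pos_of_nonneg [IsStrictOrderedRing R] {x y : ι → R} (hx : ∀ i, 0 ≤ x i)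
    (hy : ∀ i, 0 ≤ y i) {i : ι} (hxi : 0 < x i) (hyi : 0 < y i) : 0 < x ⬝ᵥ y :=
  Finset.sum_pos' (fun i _ => mul_nonneg (hx i) (hy i))
    ⟨i, Finset.mem_univ i, mul_pos hxi hyi⟩

lemma abs_last_pos [IsOrderedAddMonoid R] {n : ℕ} {x : Fin (n + 1) → R} (hx0 : x ≠ 0)
    (hx : Monotone |x|) : 0 < |x (Fin.last n)| := by
  obtain ⟨k, hk⟩ := Function.ne_iff.1 hx0
  exact (abs_pos.2 hk).trans_le (hx k.le_last)

lemma add_sq_eq_of_nonneg_mul {a b : ℝ} (hab : 0 ≤ a * b) : (a + b) ^ 2 = (|a| + |b|) ^ 2 := by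
  rw [← sq_abs (a + b), (abs_add_eq_add_abs_iff a b).2 (mul_nonneg_iff.1 hab)]

lemma sq_abs_sub_abs_le_sq_add (a b : ℝ) : (|b| - |a|) ^ 2 ≤ (a + b) ^ 2 := by
  rw [add_comm, ← sub_neg_eq_add, ← abs_neg a]
  exact sq_le_sq.2 (abs_abs_sub_abs_le _ _)

end AbsoluteValues

section Spectrum

variable {ι : Type*} [Fintype ι]

lemma mem_spectrum_iff_exists_mulVec {K : Type*} [Field K] {A : Matrix ι ι K} {μ : K} :
    μ ∈ spectrum K A ↔ ∃ x : ι → K, x ≠ 0 ∧ A *ᵥ x = μ • x := by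
  rw [spectrum.mem_iff, isUnit_iff_isUnit_det, isUnit_iff_ne_zero, not_not,
    ← exists_mulVec_eq_zero_iff]
  simp only [Algebra.algebraMap_eq_smul_one, sub_mulVec, smul_mulVec, one_mulVec, sub_eq_zero,
    eq_comm (a := A *ᵥ _)]

lemma posSemidef_sub_sInf_spectrum {A : Matrix ι ι ℝ} (hA : A.IsHermitian) :
    (A - algebraMap ℝ (Matrix ι ι ℝ) (sInf (spectrum ℝ A))).PosSemidef := by
  refine posSemidef_iff_isHermitian_and_spectrum_nonneg.2 ⟨hA.sub ?_, ?_⟩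
  · exact (IsSelfAdjoint.all (sInf (spectrum ℝ A))).algebraMap _
  · rw [← spectrum.sub_singleton_eq]
    rintro _ ⟨μ, hμ, _, rfl, rfl⟩
    exact sub_nonneg.2 (csInf_le A.finite_spectrum.bddBelow hμ)

end Spectrum

section SignlessLaplacian

variable {V W : Type*} [Fintype V] [Fintype W] {G : SimpleGraph V} {H : SimpleGraph W}

lemma qmin_eq_sInf_spectrum : qmin G = sInf (spectrum ℝ (signlessLaplacian G)) :=
  congrArg sInf <| Set.ext fun _ => mem_spectrum_iff_exists_mulVec.symm

lemma signlessLaplacian_eq_incMatrix_mul_transpose :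
    signlessLaplacian G = G.incMatrix ℝ * (G.incMatrix ℝ)ᵀ := by
  rw [G.incMatrix_mul_transpose]
  ext i j
  rcases eq_or_ne i j with rfl | hij
  · simp [signlessLaplacian]
  · simp [signlessLaplacian, hij]

lemma signlessLaplacian_isHermitian : (signlessLaplacian G).IsHermitian := by
  rw [signlessLaplacian_eq_incMatrix_mul_transpose, IsHermitian,
    conjTranspose_eq_transpose_of_trivial, transpose_mul, transpose_transpose]

lemma exists_mulVec_eq_qmin_smul [Nonempty V] :
    ∃ x : V → ℝ, x ≠ 0 ∧ signlessLaplacian G *ᵥ x = qmin G • x := by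
  rw [← mem_spectrum_iff_exists_mulVec, qmin_eq_sInf_spectrum]
  refine Set.Nonempty.csInf_mem ?_ (signlessLaplacian G).finite_spectrum
  rw [signlessLaplacian_isHermitian.spectrum_real_eq_range_eigenvalues]
  exact Set.range_nonempty _

lemma dotProduct_sub_qmin_mulVec (x : V → ℝ) :
    x ⬝ᵥ (signlessLaplacian G - algebraMap ℝ _ (qmin G)) *ᵥ x =
      x ⬝ᵥ signlessLaplacian G *ᵥ x - qmin G * (x ⬝ᵥ x) := by
  rw [sub_mulVec, dotProduct_sub, Algebra.algebraMap_eq_smul_one, smul_mulVec, one_mulVec,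
    dotProduct_smul, smul_eq_mul]

lemma qmin_mul_dotProduct_self_le (x : V → ℝ) :
    qmin G * (x ⬝ᵥ x) ≤ x ⬝ᵥ signlessLaplacian G *ᵥ x := by
  rw [← sub_nonneg, ← dotProduct_sub_qmin_mulVec, qmin_eq_sInf_spectrum]
  exact (posSemidef_sub_sInf_spectrum signlessLaplacian_isHermitian).dotProduct_mulVec_nonneg x

lemma mulVec_eq_qmin_smul_of_dotProduct_eq {x : V → ℝ}
    (hx : x ⬝ᵥ signlessLaplacian G *ᵥ x = qmin G * (x ⬝ᵥ x)) :
    signlessLaplacian G *ᵥ x = qmin G • x := by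
  rw [← sub_eq_zero, ← dotProduct_sub_qmin_mulVec, qmin_eq_sInf_spectrum] at hx
  have h := ((posSemidef_sub_sInf_spectrum signlessLaplacian_isHermitian).dotProduct_mulVec_zero_iff
    x).1 hx
  rwa [← qmin_eq_sInf_spectrum, sub_mulVec, Algebra.algebraMap_eq_smul_one, smul_mulVec,
    one_mulVec, sub_eq_zero] at h

lemma signlessLaplacian_eq_submatrix_of_iso (e : G ≃g H) :
    signlessLaplacian G = (signlessLaplacian H).submatrix e e := by
  ext i j
  simp only [signlessLaplacian, submatrix_apply, e.map_adj_iff, e.degree_eq, e.injective.eq_iff]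

lemma qmin_eq_of_iso (e : G ≃g H) : qmin G = qmin H := by
  rw [qmin_eq_sInf_spectrum, qmin_eq_sInf_spectrum, signlessLaplacian_eq_submatrix_of_iso e]
  exact congrArg sInf
    (AlgEquiv.spectrum_eq (reindexAlgEquiv ℝ ℝ e.symm.toEquiv) (signlessLaplacian H))

lemma dotProduct_signlessLaplacian_mulVec' (x y : V → ℝ) :
    x ⬝ᵥ signlessLaplacian G *ᵥ y = ((G.incMatrix ℝ)ᵀ *ᵥ x) ⬝ᵥ ((G.incMatrix ℝ)ᵀ *ᵥ y) := by
  rw [signlessLaplacian_eq_incMatrix_mul_transpose, ← mulVec_mulVec, dotProduct_mulVec,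
    ← mulVec_transpose]

lemma transpose_incMatrix_mulVec_of_adj {R : Type*} [NonAssocSemiring R] (x : V → R) {u v : V}
    (huv : G.Adj u v) : ((G.incMatrix R)ᵀ *ᵥ x) s(u, v) = x u + x v := by
  have hinc (a : V) : s(u, v) ∈ G.incidenceSet a ↔ a ∈ ({u, v} : Finset V) := by
    simp [SimpleGraph.mk'_mem_incidenceSet_iff, huv]
  simp only [mulVec, dotProduct, transpose_apply, SimpleGraph.incMatrix_apply', hinc, ite_mul,
    one_mul, zero_mul, Finset.sum_ite_mem, Finset.univ_inter]
  exact Finset.sum_pair huv.ne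

lemma transpose_incMatrix_mulVec_of_notMem {R : Type*} [NonAssocSemiring R] (x : V → R)
    {e : Sym2 V} (he : e ∉ G.edgeSet) : ((G.incMatrix R)ᵀ *ᵥ x) e = 0 :=
  Finset.sum_eq_zero fun a _ => by
    simp only [transpose_apply, G.incMatrix_of_notMem_incidenceSet fun h => he h.1, zero_mul]

lemma dotProduct_signlessLaplacian_mulVec [LinearOrder V] (x y : V → ℝ) :
    x ⬝ᵥ signlessLaplacian G *ᵥ y =
      ∑ e ∈ G.edgeFinset, (x e.inf + x e.sup) * (y e.inf + y e.sup) := by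
  rw [dotProduct_signlessLaplacian_mulVec', dotProduct]
  rw [← Finset.sum_subset G.edgeFinset.subset_univ fun e _ he => by
    rw [transpose_incMatrix_mulVec_of_notMem x (by simpa using he), zero_mul]]
  refine Finset.sum_congr rfl fun e => e.ind fun u v huv => ?_
  have huv : G.Adj u v := by simpa using huv
  rw [transpose_incMatrix_mulVec_of_adj x huv, transpose_incMatrix_mulVec_of_adj y huv]
  rcases le_total u v with h | h <;> simp [h, add_comm]

end SignlessLaplacian

section Bipartite

variable {V : Type*} {G B : SimpleGraph V} {u v : V}

lemma colorable_two_of_forall_adj_ne (c : V → Bool) (hc : ∀ ⦃u v⦄, G.Adj u v → c u ≠ c v) :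
    G.Colorable 2 :=
  (SimpleGraph.Coloring.mk c fun h => hc h).colorable

lemma colorable_two_of_forall_adj_add_eq_zero (hG : G.Connected) {x : V → ℝ} (hx0 : x ≠ 0)
    (hx : ∀ ⦃u v⦄, G.Adj u v → x u + x v = 0) : G.Colorable 2 := by
  have habs (u v : V) : |x u| = |x v| := by
    obtain ⟨p⟩ := hG.preconnected u v
    induction p with
    | nil => rfl
    | cons huw _ ih => rw [← ih, eq_neg_of_add_eq_zero_left (hx huw), abs_neg]
  obtain ⟨w, hw⟩ := Function.ne_iff.1 hx0
  have hne (v : V) : x v ≠ 0 := abs_ne_zero.1 (habs w v ▸ abs_ne_zero.2 hw)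
  refine colorable_two_of_forall_adj_ne (fun v => decide (0 < x v)) fun u v huv hc => hne v ?_
  have := hx huv
  rcases (hne v).lt_or_gt with hv | hv <;> grind

lemma colorable_two_sup_edge (hB : B.Colorable 2) (huv : ¬ B.Reachable u v) :
    (B ⊔ SimpleGraph.edge u v).Colorable 2 := by
  let c : B.Coloring Bool := hB.toColoring (by simp)
  -- Recolour the component of `u` so that `u` gets `true`, and all other components so that `v`
  -- gets `false`.
  refine colorable_two_of_forall_adj_ne
    (fun w => if B.Reachable u w then !(c w ^^ c u) else c w ^^ c v) fun a b hab => ?_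
  rw [SimpleGraph.sup_adj, SimpleGraph.edge_adj] at hab
  rcases hab with hab | ⟨⟨rfl, rfl⟩ | ⟨rfl, rfl⟩, -⟩
  · have hreach : B.Reachable u a ↔ B.Reachable u b :=
      ⟨fun h => h.trans hab.reachable, fun h => h.trans hab.symm.reachable⟩
    have hc := Bool.eq_not_iff.2 (c.valid hab)
    by_cases h : B.Reachable u b <;> simp [hreach, h, hc]
  · simp [huv]
  · simp [huv]

lemma exists_adj_not_adj_not_isBridge [Finite V] (hG : ¬ G.Colorable 2) (hB : B.Colorable 2)
    (hBG : B ≤ G) : ∃ u v, G.Adj u v ∧ ¬ B.Adj u v ∧ ¬ G.IsBridge s(u, v) := by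
  obtain ⟨M, hBM, hM⟩ := (Set.toFinite {M | M ≤ G ∧ M.Colorable 2}).exists_le_maximal ⟨hBG, hB⟩
  obtain ⟨u, v, huv, hMuv⟩ : ∃ u v, G.Adj u v ∧ ¬ M.Adj u v := by
    by_contra! h
    exact hG (hM.prop.2.mono_left h)
  refine ⟨u, v, huv, fun h => hMuv (hBM h), fun hbridge => ?_⟩
  have hreach : ¬ M.Reachable u v := fun h => hMuv ((hbridge.anti hM.prop.1).reachable_iff_adj.1 h)
  refine (SimpleGraph.lt_sup_edge _ _ _ huv.ne hMuv).not_ge (hM.le_of_ge ⟨?_, ?_⟩ le_sup_left)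
  · exact sup_le hM.prop.1 ((SimpleGraph.edge_le_iff _).2 (.inr huv))
  · exact colorable_two_sup_edge hM.prop.2 hreach

lemma exists_adj_nonneg_mul_not_isBridge [Finite V] (hG : ¬ G.Colorable 2) (x : V → ℝ) :
    ∃ u v, G.Adj u v ∧ 0 ≤ x u * x v ∧ ¬ G.IsBridge s(u, v) := by
  let B : SimpleGraph V :=
    { Adj := fun u v => G.Adj u v ∧ x u * x v < 0
      symm := ⟨fun u v h => ⟨h.1.symm, mul_comm (x u) (x v) ▸ h.2⟩⟩
      loopless := ⟨fun v h => G.loopless.irrefl v h.1⟩ }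
  have hB : B.Colorable 2 := colorable_two_of_forall_adj_ne (fun v => decide (0 < x v))
    fun u v huv => by
      have := mul_neg_iff.1 huv.2
      grind
  obtain ⟨u, v, huv, hBuv, hbridge⟩ := exists_adj_not_adj_not_isBridge hG hB fun _ _ h => h.1
  exact ⟨u, v, huv, not_lt.1 fun h => hBuv ⟨huv, h⟩, hbridge⟩

lemma exists_adj_ne_not_isBridge (huv : G.Adj u v) (hbridge : ¬ G.IsBridge s(u, v)) :
    ∃ w, G.Adj u w ∧ w ≠ v ∧ ¬ G.IsBridge s(u, w) := by
  rw [SimpleGraph.isBridge_iff_forall_cycle_notMem huv] at hbridge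
  push Not at hbridge
  obtain ⟨a, p, hp, huvp⟩ := hbridge
  have hu := p.fst_mem_support_of_mem_edges huvp
  have hq := hp.rotate hu
  set q := p.rotate u hu
  by_cases hsnd : q.snd = v
  · refine ⟨q.penultimate, (q.adj_penultimate hq.not_nil).symm, ?_, fun h => ?_⟩
    · exact hsnd ▸ hq.snd_ne_penultimate.symm
    · exact h.notMem_edges_of_isCycle hq (Sym2.eq_swap ▸ q.mk_penultimate_end_mem_edges hq.not_nil)
  · refine ⟨q.snd, q.adj_snd hq.not_nil, hsnd, fun h => ?_⟩
    exact h.notMem_edges_of_isCycle hq (q.mk_start_snd_mem_edges hq.not_nil)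

lemma card_le_card_edgeFinset [Fintype V] (hG : G.Connected) (hnb : ¬ G.Colorable 2) :
    Fintype.card V ≤ G.edgeFinset.card := by
  have hlt : Nat.card V ≠ Nat.card G.edgeSet + 1 := fun h =>
    hnb (SimpleGraph.isTree_iff_connected_and_card.2 ⟨hG, h.symm⟩).colorable_two
  have hle := hG.card_vert_le_card_edgeSet_add_one
  rw [Nat.card_eq_fintype_card, Nat.card_eq_fintype_card, ← G.edgeFinset_card] at hlt hle
  lia

lemma qmin_pos [Fintype V] (hG : G.Connected) (hnb : ¬ G.Colorable 2) : 0 < qmin G := by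
  have := hG.nonempty
  obtain ⟨x, hx0, hx⟩ := exists_mulVec_eq_qmin_smul (G := G)
  contrapose! hnb
  refine colorable_two_of_forall_adj_add_eq_zero hG hx0 fun u v huv => ?_
  suffices (G.incMatrix ℝ)ᵀ *ᵥ x = 0 by
    rw [← transpose_incMatrix_mulVec_of_adj x huv, this, Pi.zero_apply]
  rw [← dotProduct_self_eq_zero]
  refine le_antisymm ?_ (dotProduct_self_star_nonneg _)
  rw [← dotProduct_signlessLaplacian_mulVec', hx, dotProduct_smul]
  exact mul_nonpos_of_nonpos_of_nonneg hnb (dotProduct_self_star_nonneg x)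

end Bipartite

section Dirichlet

/-- The Dirichlet energy of `y` on `H`, i.e. the quadratic form of the ordinary Laplacian of `H`.
The linear order only serves to name the two ends `e.inf`, `e.sup` of an edge `e`. -/
noncomputable def dirichletEnergy {V : Type*} [Fintype V] [LinearOrder V] (H : SimpleGraph V)
    (y : V → ℝ) : ℝ :=
  ∑ e ∈ H.edgeFinset, (y e.sup - y e.inf) ^ 2

variable {n : ℕ}

/-- The increments `y (k + 1) - y k` of a vector `y` along the path `0, 1, …, n`. -/
def gap (y : Fin (n + 1) → ℝ) (k : Fin n) : ℝ :=
  y k.succ - y k.castSucc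

/-- The indices `k` of the path edges `k, k + 1` between `i` and `j`; equivalently, those `k` for
which the cut `{0, …, k} | {k + 1, …, n}` separates `i` from `j`. -/
def cuts (i j : Fin (n + 1)) : Finset (Fin n) :=
  {k | i ≤ k.castSucc ∧ k.castSucc < j}

variable {H : SimpleGraph (Fin (n + 1))} {y : Fin (n + 1) → ℝ} {i j l : Fin (n + 1)} {k : Fin n}

lemma mem_cuts : k ∈ cuts i j ↔ i ≤ k.castSucc ∧ k.castSucc < j := by
  simp [cuts]

lemma cuts_self : cuts i i = ∅ :=
  Finset.eq_empty_of_forall_notMem fun _ h => (mem_cuts.1 h).1.not_gt (mem_cuts.1 h).2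

lemma cuts_succ (hik : i ≤ k.castSucc) : cuts i k.succ = insert k (cuts i k.castSucc) := by
  ext a
  simp only [Finset.mem_insert, mem_cuts]
  grind

lemma cuts_union_cuts (hil : i ≤ l) (hlj : l ≤ j) : cuts i l ∪ cuts l j = cuts i j := by
  ext a
  simp only [Finset.mem_union, mem_cuts]
  grind

lemma disjoint_cuts_cuts : Disjoint (cuts i l) (cuts l j) :=
  Finset.disjoint_left.2 fun _ h h' => (mem_cuts.1 h).2.not_ge (mem_cuts.1 h').1

lemma gap_nonneg (hy : Monotone y) (k : Fin n) : 0 ≤ gap y k :=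
  sub_nonneg.2 (hy k.castSucc_lt_succ.le)

lemma sum_cuts_sq_gap_le (hy : Monotone y) (hij : i ≤ j) :
    ∑ k ∈ cuts i j, gap y k ^ 2 ≤ (y j - y i) ^ 2 := by
  induction j using Fin.induction with
  | zero => simp [Fin.le_zero_iff.1 hij, cuts_self]
  | succ k ih =>
    rcases hij.eq_or_lt with rfl | hik
    · simp [cuts_self]
    · rw [← Fin.le_castSucc_iff] at hik
      rw [cuts_succ hik, Finset.sum_insert (by simp [mem_cuts])]
      have hgap : y k.succ - y i = gap y k + (y k.castSucc - y i) := by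
        rw [gap]
        ring
      rw [hgap]
      nlinarith [ih hik, gap_nonneg hy k, hy hik]

lemma exists_adj_mem_cuts (hH : H.Connected) (k : Fin n) : ∃ i j, H.Adj i j ∧ k ∈ cuts i j := by
  obtain ⟨p⟩ := hH.preconnected 0 (Fin.last n)
  obtain ⟨d, -, hfst, hsnd⟩ := p.exists_boundary_dart (Set.Iic k.castSucc) (Fin.zero_le _)
    (Fin.castSucc_lt_last k).not_ge
  exact ⟨d.fst, d.snd, d.adj, mem_cuts.2 ⟨hfst, not_le.1 hsnd⟩⟩

lemma sum_sq_gap_le_sum_sum_cuts (hH : H.Connected) :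
    ∑ k, gap y k ^ 2 ≤ ∑ e ∈ H.edgeFinset, ∑ k ∈ cuts e.inf e.sup, gap y k ^ 2 := by
  rw [Finset.sum_comm' (t' := Finset.univ)
    (s' := fun k => {e ∈ H.edgeFinset | k ∈ cuts e.inf e.sup}) (by simp [and_comm])]
  refine Finset.sum_le_sum fun k _ => ?_
  obtain ⟨i, j, hij, hk⟩ := exists_adj_mem_cuts hH k
  have hlt : i ≤ j := ((mem_cuts.1 hk).1.trans_lt (mem_cuts.1 hk).2).le
  exact Finset.single_le_sum (f := fun _ => gap y k ^ 2) (fun _ _ => sq_nonneg _)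
    (a := s(i, j)) (by simp [hij, hlt, hk])

lemma sum_cuts_edge_sq_gap_le (hy : Monotone y) (e : Sym2 (Fin (n + 1))) :
    ∑ k ∈ cuts e.inf e.sup, gap y k ^ 2 ≤ (y e.sup - y e.inf) ^ 2 :=
  sum_cuts_sq_gap_le hy e.inf_le_sup

lemma sum_sq_gap_le_dirichletEnergy (hH : H.Connected) (hy : Monotone y) :
    ∑ k, gap y k ^ 2 ≤ dirichletEnergy H y :=
  (sum_sq_gap_le_sum_sum_cuts hH).trans (Finset.sum_le_sum fun e _ => sum_cuts_edge_sq_gap_le hy e)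

lemma eq_or_eq_of_dirichletEnergy_le (hH : H.Connected) (hy : Monotone y)
    (hE : dirichletEnergy H y ≤ ∑ k, gap y k ^ 2) (hij : H.Adj i j) (hil : i ≤ l) (hlj : l ≤ j) :
    y i = y l ∨ y l = y j := by
  have heq := (Finset.sum_eq_sum_iff_of_le fun e _ => sum_cuts_edge_sq_gap_le hy e).1
    (le_antisymm (Finset.sum_le_sum fun e _ => sum_cuts_edge_sq_gap_le hy e)
      (hE.trans (sum_sq_gap_le_sum_sum_cuts hH))) s(i, j) (by simpa using hij)
  simp only [Sym2.inf_mk, Sym2.sup_mk, inf_of_le_left (hil.trans hlj),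
    sup_of_le_right (hil.trans hlj)] at heq
  rw [← cuts_union_cuts hil hlj, Finset.sum_union disjoint_cuts_cuts] at heq
  have hprod : (y l - y i) * (y j - y l) ≤ 0 := by
    linarith [sum_cuts_sq_gap_le hy hil, sum_cuts_sq_gap_le hy hlj,
      show (y j - y i) ^ 2 = (y l - y i) ^ 2 + (y j - y l) ^ 2 + 2 * ((y l - y i) * (y j - y l)) by
        ring]
  have hprod' := le_antisymm hprod (mul_nonneg (sub_nonneg.2 (hy hil)) (sub_nonneg.2 (hy hlj)))
  rcases mul_eq_zero.1 hprod' with h | h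
  · exact .inl (sub_eq_zero.1 h).symm
  · exact .inr (sub_eq_zero.1 h).symm

end Dirichlet

section Lollipop

/-- The path `0, 1, …, m + 3` together with the edge `0, 2`: the graph `C*_{3,m}` of order `m + 4`,
labelled so that the entries of a least eigenvector increase in absolute value. -/
def lollipop (m : ℕ) : SimpleGraph (Fin (m + 4)) :=
  SimpleGraph.pathGraph (m + 4) ⊔ SimpleGraph.edge 0 2

/-- The sign pattern `+, +, -, +, -, …` of a least eigenvector of the lollipop. The truncated
subtraction gives the vertices `0` and `1` the same sign. -/
def lollipopSign {m : ℕ} (k : Fin (m + 4)) : ℝ :=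
  (-1) ^ (k.val - 1)

/-- The bilinear form of the signless Laplacian of the lollipop in the coordinates
`lollipopSign * z`: the edge `0, 1` contributes sums, every other edge differences. -/
noncomputable def lollipopForm {m : ℕ} (d z : Fin (m + 4) → ℝ) : ℝ :=
  (d 0 + d 1) * (z 0 + z 1) + (d 2 - d 0) * (z 2 - z 0) +
    ∑ k : Fin (m + 2), gap d k.succ * gap z k.succ

variable {m : ℕ}

lemma lollipop_adj {i j : Fin (m + 4)} : (lollipop m).Adj i j ↔
    (i.val + 1 = j.val ∨ j.val + 1 = i.val) ∨ i.val = 0 ∧ j.val = 2 ∨ i.val = 2 ∧ j.val = 0 := by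
  rw [lollipop, SimpleGraph.sup_adj, SimpleGraph.pathGraph_adj, SimpleGraph.edge_adj]
  simp only [Fin.ext_iff, Fin.val_zero, Fin.val_two]
  lia

lemma lollipop_edgeFinset : (lollipop m).edgeFinset =
    insert s(0, 2) (Finset.univ.image fun k : Fin (m + 3) => s(k.castSucc, k.succ)) := by
  ext e
  induction e with | _ i j
  simp only [SimpleGraph.mem_edgeFinset, SimpleGraph.mem_edgeSet, lollipop_adj, Finset.mem_insert,
    Finset.mem_image, Finset.mem_univ, true_and, Sym2.eq_iff, Fin.ext_iff, Fin.val_castSucc,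
    Fin.val_succ, Fin.val_zero, Fin.val_two]
  constructor
  · rintro ((h | h) | h)
    · exact .inr ⟨⟨i, by lia⟩, .inl ⟨rfl, h⟩⟩
    · exact .inr ⟨⟨j, by lia⟩, .inr ⟨rfl, h⟩⟩
    · exact .inl h
  · rintro (h | ⟨k, h⟩) <;> lia

lemma sum_lollipop_edgeFinset {M : Type*} [AddCommMonoid M] (f : Sym2 (Fin (m + 4)) → M) :
    ∑ e ∈ (lollipop m).edgeFinset, f e =
      f s(0, 2) + ∑ k : Fin (m + 3), f s(k.castSucc, k.succ) := by
  rw [lollipop_edgeFinset, Finset.sum_insert, Finset.sum_image]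
  · intro k _ l _ h
    grind
  · simp only [Finset.mem_image, Finset.mem_univ, true_and, not_exists, Sym2.eq_iff, Fin.ext_iff,
      Fin.val_castSucc, Fin.val_succ, Fin.val_zero, Fin.val_two]
    lia

lemma card_lollipop_edgeFinset : (lollipop m).edgeFinset.card = m + 4 := by
  rw [Finset.card_eq_sum_ones, sum_lollipop_edgeFinset, Fin.sum_const, smul_eq_mul]
  ring

lemma eq_lollipop_of_le {G : SimpleGraph (Fin (m + 4))} (hG : G.Connected)
    (hnb : ¬ G.Colorable 2) (hle : G ≤ lollipop m) : G = lollipop m := by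
  refine SimpleGraph.edgeFinset_inj.1
    (Finset.eq_of_subset_of_card_le (SimpleGraph.edgeFinset_subset_edgeFinset.2 hle) ?_)
  simpa [card_lollipop_edgeFinset] using card_le_card_edgeFinset hG hnb

lemma lollipopSign_mul_self (k : Fin (m + 4)) : lollipopSign k * lollipopSign k = 1 := by
  rw [lollipopSign, ← mul_pow, neg_one_mul, neg_neg, one_pow]

lemma lollipopSign_succ_succ (k : Fin (m + 2)) :
    lollipopSign k.succ.succ = -lollipopSign k.succ.castSucc := by
  simp [lollipopSign, pow_succ]

lemma lollipopSign_mul_dotProduct (d z : Fin (m + 4) → ℝ) :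
    (lollipopSign * d) ⬝ᵥ (lollipopSign * z) = d ⬝ᵥ z :=
  Finset.sum_congr rfl fun k _ => by
    simp only [Pi.mul_apply]
    rw [mul_mul_mul_comm, lollipopSign_mul_self, one_mul]

lemma dotProduct_signlessLaplacian_lollipop_mulVec (d z : Fin (m + 4) → ℝ) :
    (lollipopSign * d) ⬝ᵥ signlessLaplacian (lollipop m) *ᵥ (lollipopSign * z) =
      lollipopForm d z := by
  have hpath (k : Fin (m + 2)) :
      (lollipopSign k.succ.castSucc * d k.succ.castSucc +
          lollipopSign k.succ.succ * d k.succ.succ) *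
        (lollipopSign k.succ.castSucc * z k.succ.castSucc +
          lollipopSign k.succ.succ * z k.succ.succ) = gap d k.succ * gap z k.succ := by
    rw [lollipopSign_succ_succ, gap, gap]
    linear_combination (d k.succ.succ - d k.succ.castSucc) * (z k.succ.succ - z k.succ.castSucc) *
      lollipopSign_mul_self k.succ.castSucc
  rw [dotProduct_signlessLaplacian_mulVec, sum_lollipop_edgeFinset, Fin.sum_univ_succ]
  simp only [Sym2.inf_mk, Sym2.sup_mk, inf_of_le_left Fin.castSucc_lt_succ.le,
    sup_of_le_right Fin.castSucc_lt_succ.le, Pi.mul_apply, hpath]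
  have h0 : lollipopSign (0 : Fin (m + 4)) = 1 := by simp [lollipopSign]
  have h1 : lollipopSign (1 : Fin (m + 4)) = 1 := by simp [lollipopSign]
  have h2 : lollipopSign (2 : Fin (m + 4)) = -1 := by rw [lollipopSign, Fin.val_two]; norm_num
  simp only [lollipopForm, Fin.castSucc_zero, Fin.succ_zero_eq_one, inf_of_le_left (Fin.zero_le _),
    sup_of_le_right (Fin.zero_le _), h0, h1, h2]
  ring

lemma lollipopForm_self (y : Fin (m + 4) → ℝ) :
    lollipopForm y y = ∑ k, gap y k ^ 2 + (y 2 - y 0) ^ 2 + 4 * (y 0 * y 1) := by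
  have h0 : gap y 0 = y 1 - y 0 := rfl
  simp only [lollipopForm, Fin.sum_univ_succ (fun k => gap y k ^ 2), h0, ← sq]
  ring

lemma le_lollipop_of_dirichletEnergy_le {H : SimpleGraph (Fin (m + 4))} {y : Fin (m + 4) → ℝ}
    (hH : H.Connected) (hy : Monotone y) (hy' : StrictMonoOn y (Set.Ioi 0))
    (hE : dirichletEnergy H y ≤ ∑ k, gap y k ^ 2) : H ≤ lollipop m := by
  intro i j hij
  wlog hlt : i < j generalizing i j
  · exact (this hij.symm (hij.ne.lt_or_gt.resolve_left hlt)).symm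
  by_contra hnadj
  rw [lollipop_adj] at hnadj
  -- A missing edge skips some `l ≥ 2`, at which `y` increases strictly on both sides.
  obtain ⟨l, hl, hil, hlj⟩ : ∃ l, 1 < l ∧ i < l ∧ l < j :=
    ⟨⟨max i.val 1 + 1, by lia⟩, by simp only [Fin.lt_def, Fin.val_one]; lia⟩
  have hl0 := Fin.zero_lt_one.trans hl
  have hi : y i < y l := (hy (le_max_left i 1)).trans_lt
    (hy' (Fin.zero_lt_one.trans_le (le_max_right i 1)) hl0 (max_lt hil hl))
  exact (eq_or_eq_of_dirichletEnergy_le hH hy hE hij hil.le hlj.le).elim hi.ne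
    (hy' hl0 (hl0.trans hlj) hlj).ne

section Eigenvector

variable {y : Fin (m + 4) → ℝ} {q : ℝ}

lemma gap_succ_succ_eq_of_lollipopForm_eq (hform : ∀ d, lollipopForm d y = q * (d ⬝ᵥ y))
    (k : Fin (m + 1)) :
    gap y k.succ.succ = q * ((fun v => if k.succ.succ.castSucc < v then 1 else 0) ⬝ᵥ y) := by
  -- This test vector is constant off the single edge `k + 2, k + 3`.
  rw [← hform]
  set d : Fin (m + 4) → ℝ := fun v => if k.succ.succ.castSucc < v then 1 else 0
  have hgap (a : Fin (m + 2)) : gap d a.succ = if a = k.succ then 1 else 0 := by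
    simp only [gap, d]
    grind
  have hd (v : Fin (m + 4)) (hv : v.val ≤ 2) : d v = 0 :=
    if_neg (by simp only [Fin.lt_def, Fin.val_castSucc, Fin.val_succ]; lia)
  simp only [lollipopForm, hgap, ite_mul, one_mul, zero_mul, Finset.sum_ite_eq',
    Finset.mem_univ, if_true, hd 0 (by simp), hd 1 (by simp), hd 2 Fin.val_two.le]
  ring

lemma three_mul_gap_one_eq_of_lollipopForm_eq (hform : ∀ d, lollipopForm d y = q * (d ⬝ᵥ y)) :
    3 * gap y 1 = 2 * y 0 + q * gap y 1 + gap y 2 := by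
  let d : Fin (m + 4) → ℝ := vecCons 0 (vecCons (-1) (vecCons 1 0))
  have hdy : d ⬝ᵥ y = gap y 1 := by
    simp only [d, cons_dotProduct, zero_dotProduct, vecHead, vecTail, Function.comp_apply, gap]
    change 0 * y 0 + (-1 * y 1 + (1 * y 2 + 0)) = y 2 - y 1
    ring
  have hsum : ∑ k : Fin (m + 2), gap d k.succ * gap y k.succ = 2 * gap y 1 - gap y 2 := by
    have htail (k : Fin m) : gap d k.succ.succ.succ = 0 := by simp [gap, d]
    have h1 : gap d 1 = 2 := show (1 : ℝ) - -1 = 2 by norm_num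
    have h2 : gap d 2 = -1 := show (0 : ℝ) - 1 = -1 by norm_num
    simp only [Fin.sum_univ_succ, htail, zero_mul, Finset.sum_const_zero, add_zero,
      Fin.succ_zero_eq_one, Fin.succ_one_eq_two, h1, h2]
    ring
  have heq := hform d
  rw [hdy, lollipopForm, hsum] at heq
  simp only [show d 0 = 0 from rfl, show d 1 = -1 from rfl, show d 2 = 1 from rfl] at heq
  have hgap1 : gap y 1 = y 2 - y 1 := rfl
  linarith

lemma gap_succ_pos_of_lollipopForm_eq (hq : 0 < q) (hy0 : ∀ k, 0 ≤ y k)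
    (hylast : 0 < y (Fin.last _)) (hy1 : 0 ≤ gap y 1)
    (hform : ∀ d, lollipopForm d y = q * (d ⬝ᵥ y)) (k : Fin (m + 2)) : 0 < gap y k.succ := by
  have hsucc (k : Fin (m + 1)) : 0 < gap y k.succ.succ := by
    rw [gap_succ_succ_eq_of_lollipopForm_eq hform]
    refine mul_pos hq (dotProduct_pos_of_nonneg (fun v => by positivity) hy0 ?_ hylast)
    rw [if_pos (Fin.castSucc_lt_last _)]
    exact one_pos
  rcases Fin.eq_zero_or_eq_succ k with rfl | ⟨k, rfl⟩
  · have hy0 := hy0 0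
    have hgap2 : 0 < gap y 2 := hsucc 0
    have hgap1 : 0 < 3 * gap y 1 := by
      rw [three_mul_gap_one_eq_of_lollipopForm_eq hform]
      positivity
    simpa using hgap1
  · exact hsucc k

lemma strictMonoOn_Ioi_zero_of_gap_succ_pos (hgap : ∀ k : Fin (m + 2), 0 < gap y k.succ) :
    StrictMonoOn y (Set.Ioi 0) := by
  have hsucc : StrictMono fun k : Fin (m + 3) => y k.succ :=
    Fin.strictMono_iff_lt_succ.2 fun k => sub_pos.1 (hgap k)
  intro i hi j hj hij
  obtain ⟨i, rfl⟩ := Fin.exists_succ_eq.2 (Fin.pos_iff_ne_zero.1 hi)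
  obtain ⟨j, rfl⟩ := Fin.exists_succ_eq.2 (Fin.pos_iff_ne_zero.1 hj)
  exact hsucc (Fin.succ_lt_succ_iff.1 hij)

end Eigenvector

end Lollipop

section Comparison

section EdgeDeletion

variable {V : Type*} [Fintype V] {G : SimpleGraph V} {u v : V}

-- Naming `H` keeps its edge set free of the computable decidability instance of `deleteEdges`,
-- which would not match the classical one in `signlessLaplacian` and `dirichletEnergy`.
lemma sum_edgeFinset_eq_add_sum_deleteEdges {M : Type*} [AddCommMonoid M] {H : SimpleGraph V}
    (huv : G.Adj u v) (hH : H = G.deleteEdges {s(u, v)}) (f : Sym2 V → M) :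
    ∑ e ∈ G.edgeFinset, f e = f s(u, v) + ∑ e ∈ H.edgeFinset, f e := by
  have hedge : H.edgeFinset = G.edgeFinset.erase s(u, v) := by
    ext e
    simp [hH, and_comm]
  rw [hedge, Finset.add_sum_erase _ _ (by simpa using huv)]

variable [LinearOrder V]

lemma dirichletEnergy_eq_add_deleteEdges (huv : G.Adj u v) (y : V → ℝ) :
    dirichletEnergy G y = (y v - y u) ^ 2 + dirichletEnergy (G.deleteEdges {s(u, v)}) y := by
  rw [dirichletEnergy, dirichletEnergy, sum_edgeFinset_eq_add_sum_deleteEdges huv rfl]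
  rcases le_total u v with h | h <;> simp [h, sub_sq_comm]

lemma dotProduct_signlessLaplacian_mulVec_self_eq_add_deleteEdges (huv : G.Adj u v) (x : V → ℝ) :
    x ⬝ᵥ signlessLaplacian G *ᵥ x = (x u + x v) ^ 2 +
      x ⬝ᵥ signlessLaplacian (G.deleteEdges {s(u, v)}) *ᵥ x := by
  rw [dotProduct_signlessLaplacian_mulVec, dotProduct_signlessLaplacian_mulVec,
    sum_edgeFinset_eq_add_sum_deleteEdges huv rfl]
  rcases le_total u v with h | h <;> simp [h, ← sq, add_comm]

lemma dirichletEnergy_abs_le (x : V → ℝ) :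
    dirichletEnergy G |x| ≤ x ⬝ᵥ signlessLaplacian G *ᵥ x := by
  rw [dotProduct_signlessLaplacian_mulVec]
  exact Finset.sum_le_sum fun e _ => (sq_abs_sub_abs_le_sq_add _ _).trans_eq (sq _)

lemma dirichletEnergy_abs_add_le_of_nonneg_mul (huv : G.Adj u v) {x : V → ℝ}
    (hx : 0 ≤ x u * x v) :
    dirichletEnergy G |x| + 4 * (|x u| * |x v|) ≤ x ⬝ᵥ signlessLaplacian G *ᵥ x := by
  rw [dirichletEnergy_eq_add_deleteEdges huv,
    dotProduct_signlessLaplacian_mulVec_self_eq_add_deleteEdges huv, add_sq_eq_of_nonneg_mul hx]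
  have hle := dirichletEnergy_abs_le (G := G.deleteEdges {s(u, v)}) x
  simp only [Pi.abs_apply]
  linarith

end EdgeDeletion

variable {m : ℕ} {G : SimpleGraph (Fin (m + 4))}

lemma exists_connected_deleteEdges_energy_le (hG : G.Connected) (hnb : ¬ G.Colorable 2)
    {x : Fin (m + 4) → ℝ} (hx : Monotone |x|) :
    ∃ r s, r < s ∧ 2 ≤ s ∧ G.Adj r s ∧ (G.deleteEdges {s(r, s)}).Connected ∧
      dirichletEnergy (G.deleteEdges {s(r, s)}) |x| + (|x s| - |x 0|) ^ 2 + 4 * (|x 0| * |x 1|) ≤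
        x ⬝ᵥ signlessLaplacian G *ᵥ x := by
  obtain ⟨r, s, hrs, hxrs, hbridge⟩ := exists_adj_nonneg_mul_not_isBridge hnb x
  wlog hlt : r < s generalizing r s
  · exact this s r hrs.symm (mul_comm (x r) _ ▸ hxrs) (Sym2.eq_swap ▸ hbridge)
      (hrs.ne.lt_or_gt.resolve_left hlt)
  rcases le_or_gt 2 s with hs | hs
  · refine ⟨r, s, hlt, hs, hrs, hG.connected_delete_edge_of_not_isBridge hbridge, ?_⟩
    have h0r : |x 0| ≤ |x r| := hx (Fin.zero_le r)
    have h1s : |x 1| ≤ |x s| :=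
      hx (Fin.one_le_of_ne_zero (Fin.pos_iff_ne_zero.1 ((Fin.zero_le r).trans_lt hlt)))
    have hsq : (|x s| - |x 0|) ^ 2 + 4 * (|x 0| * |x 1|) ≤ (x r + x s) ^ 2 := calc
      _ ≤ (|x s| - |x 0|) ^ 2 + 4 * (|x 0| * |x s|) := by gcongr
      _ = (|x 0| + |x s|) ^ 2 := by ring
      _ ≤ (|x r| + |x s|) ^ 2 := by gcongr
      _ = (x r + x s) ^ 2 := (add_sq_eq_of_nonneg_mul hxrs).symm
    rw [dotProduct_signlessLaplacian_mulVec_self_eq_add_deleteEdges hrs]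
    linarith [dirichletEnergy_abs_le (G := G.deleteEdges {s(r, s)}) x]
  · obtain ⟨rfl, rfl⟩ : r = 0 ∧ s = 1 := by
      simp only [Fin.ext_iff, Fin.lt_def, Fin.val_two, Fin.val_zero, Fin.val_one] at *
      lia
    obtain ⟨w, h0w, hw, hbridge⟩ := exists_adj_ne_not_isBridge hrs hbridge
    have h01 : (G.deleteEdges {s(0, w)}).Adj 0 1 := by
      simp [hrs, hw.symm]
    refine ⟨0, w, ?_, ?_, h0w, hG.connected_delete_edge_of_not_isBridge hbridge, ?_⟩
    · exact Fin.pos_iff_ne_zero.2 h0w.ne'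
    · have := h0w.ne'
      simp only [Fin.ext_iff, Fin.le_def, Fin.val_two, Fin.val_zero, Fin.val_one, ne_eq] at *
      lia
    · have hH := dirichletEnergy_abs_add_le_of_nonneg_mul h01 hxrs
      rw [dotProduct_signlessLaplacian_mulVec_self_eq_add_deleteEdges h0w]
      linarith [sq_abs_sub_abs_le_sq_add (x 0) (x w)]

lemma lollipopForm_abs_le (hG : G.Connected) (hnb : ¬ G.Colorable 2) {x : Fin (m + 4) → ℝ}
    (hx : Monotone |x|) : lollipopForm |x| |x| ≤ x ⬝ᵥ signlessLaplacian G *ᵥ x := by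
  obtain ⟨r, s, -, hs, -, hH, hE⟩ := exists_connected_deleteEdges_energy_le hG hnb hx
  rw [lollipopForm_self]
  have h02 : |x 0| ≤ |x 2| := hx (Fin.zero_le 2)
  have h2s : |x 2| ≤ |x s| := hx hs
  have hpath := sum_sq_gap_le_dirichletEnergy hH hx
  have hsq : (|x 2| - |x 0|) ^ 2 ≤ (|x s| - |x 0|) ^ 2 := by gcongr
  simp only [Pi.abs_apply] at hE ⊢
  linarith

lemma le_lollipop_of_le_lollipopForm_abs (hG : G.Connected) (hnb : ¬ G.Colorable 2)
    {x : Fin (m + 4) → ℝ} (hx : Monotone |x|) (hx' : StrictMonoOn |x| (Set.Ioi 0))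
    (hform : x ⬝ᵥ signlessLaplacian G *ᵥ x ≤ lollipopForm |x| |x|) : G ≤ lollipop m := by
  obtain ⟨r, s, hrs, hs, -, hH, hE⟩ := exists_connected_deleteEdges_energy_le hG hnb hx
  rw [lollipopForm_self] at hform
  have h02 : |x 0| ≤ |x 2| := hx (Fin.zero_le 2)
  have hpath := sum_sq_gap_le_dirichletEnergy hH hx
  simp only [Pi.abs_apply] at hform
  have hs2 : s = 2 := by
    by_contra hne
    have h02' : (0 : Fin (m + 4)) < 2 := by rw [Fin.lt_def, Fin.val_two]; exact two_pos
    have h2 : (2 : Fin (m + 4)) < s := hs.lt_of_ne' hne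
    have h2s : |x 2| < |x s| := hx' h02' (h02'.trans h2) h2
    have hsq := pow_lt_pow_left₀ (sub_lt_sub_right h2s |x 0|) (sub_nonneg.2 h02) two_ne_zero
    linarith
  subst hs2
  have hHle := le_lollipop_of_dirichletEnergy_le hH hx hx' (by linarith)
  have hr2 : (lollipop m).Adj r 2 := by
    rw [Fin.lt_def, Fin.val_two] at hrs
    rw [lollipop_adj, Fin.val_two]
    lia
  intro i j hij
  by_cases he : s(i, j) = s(r, 2)
  · exact (SimpleGraph.adj_congr_of_sym2 _ he).2 hr2
  · exact hHle (SimpleGraph.deleteEdges_adj.2 ⟨hij, he⟩)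

end Comparison

section Minimizer

variable {m : ℕ} {G : SimpleGraph (Fin (m + 4))} {x y : Fin (m + 4) → ℝ}

lemma qmin_lollipop_mul_le (y : Fin (m + 4) → ℝ) :
    qmin (lollipop m) * (y ⬝ᵥ y) ≤ lollipopForm y y := by
  rw [← dotProduct_signlessLaplacian_lollipop_mulVec, ← lollipopSign_mul_dotProduct]
  exact qmin_mul_dotProduct_self_le _

lemma lollipopForm_eq_of_self_eq (hy : lollipopForm y y = qmin (lollipop m) * (y ⬝ᵥ y))
    (d : Fin (m + 4) → ℝ) : lollipopForm d y = qmin (lollipop m) * (d ⬝ᵥ y) := by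
  rw [← dotProduct_signlessLaplacian_lollipop_mulVec, ← lollipopSign_mul_dotProduct y] at hy
  rw [← dotProduct_signlessLaplacian_lollipop_mulVec, ← lollipopSign_mul_dotProduct d]
  rw [mulVec_eq_qmin_smul_of_dotProduct_eq hy, dotProduct_smul, smul_eq_mul]

lemma lollipopForm_abs_le_qmin_mul (hG : G.Connected) (hnb : ¬ G.Colorable 2)
    (hx : Monotone |x|) (hxq : signlessLaplacian G *ᵥ x = qmin G • x) :
    lollipopForm |x| |x| ≤ qmin G * (|x| ⬝ᵥ |x|) := by
  rw [abs_dotProduct_abs, ← smul_eq_mul, ← dotProduct_smul, ← hxq]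
  exact lollipopForm_abs_le hG hnb hx

lemma qmin_lollipop_le (hG : G.Connected) (hnb : ¬ G.Colorable 2) (hx0 : x ≠ 0)
    (hx : Monotone |x|) (hxq : signlessLaplacian G *ᵥ x = qmin G • x) :
    qmin (lollipop m) ≤ qmin G := by
  refine le_of_mul_le_mul_right
    ((qmin_lollipop_mul_le |x|).trans (lollipopForm_abs_le_qmin_mul hG hnb hx hxq)) ?_
  rw [abs_dotProduct_abs]
  exact dotProduct_self_star_pos_iff.2 hx0

lemma eq_lollipop_of_qmin_eq (hG : G.Connected) (hnb : ¬ G.Colorable 2) (hx0 : x ≠ 0)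
    (hx : Monotone |x|) (hxq : signlessLaplacian G *ᵥ x = qmin G • x)
    (hq : qmin (lollipop m) = qmin G) : G = lollipop m := by
  have hmin : lollipopForm |x| |x| = qmin (lollipop m) * (|x| ⬝ᵥ |x|) :=
    (hq ▸ lollipopForm_abs_le_qmin_mul hG hnb hx hxq).antisymm (qmin_lollipop_mul_le |x|)
  have hgap := gap_succ_pos_of_lollipopForm_eq (hq ▸ qmin_pos hG hnb) (fun k => abs_nonneg (x k))
    (abs_last_pos hx0 hx) (gap_nonneg hx 1) (lollipopForm_eq_of_self_eq hmin)
  refine eq_lollipop_of_le hG hnb (le_lollipop_of_le_lollipopForm_abs hG hnb hx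
    (strictMonoOn_Ioi_zero_of_gap_succ_pos hgap) ?_)
  rw [hmin, hq, abs_dotProduct_abs, hxq, dotProduct_smul, smul_eq_mul]

lemma exists_iso_monotone_abs {V : Type*} [Fintype V] [Nonempty V] {n : ℕ} (G : SimpleGraph V)
    (hn : Fintype.card V = n) : ∃ (H : SimpleGraph (Fin n)) (_ : H ≃g G) (x : Fin n → ℝ),
      x ≠ 0 ∧ Monotone |x| ∧ signlessLaplacian H *ᵥ x = qmin H • x := by
  obtain ⟨x, hx0, hx⟩ := exists_mulVec_eq_qmin_smul (G := G)
  let e₀ : Fin n ≃ V := (Fintype.equivFinOfCardEq hn).symm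
  let e : Fin n ≃ V := (Tuple.sort fun k => |x (e₀ k)|).trans e₀
  let f : G.comap e ≃g G := SimpleGraph.Iso.comap e G
  refine ⟨G.comap e, f, x ∘ e, ?_, Tuple.monotone_sort fun k => |x (e₀ k)|, ?_⟩
  · exact fun h => hx0 (e.surjective.injective_comp_right h)
  · rw [signlessLaplacian_eq_submatrix_of_iso f, qmin_eq_of_iso f]
    change (signlessLaplacian G).submatrix e e *ᵥ (x ∘ e) = _
    rw [submatrix_mulVec_equiv, Function.comp_assoc, e.self_comp_symm, Function.comp_id, hx]
    rfl

lemma cstarRel_three_iff {a b : ℕ} (hb : b < m + 4) : cstarRel 3 m a b ↔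
    b ≤ 2 ∧ a < b ∨ a = 0 ∧ b = 3 ∨ 3 ≤ a ∧ b = a + 1 := by
  unfold cstarRel
  split_ifs <;> lia

lemma nonempty_lollipop_iso_cstar : Nonempty (lollipop m ≃g Cstar (m + 4) 3 m) := by
  refine ⟨⟨Equiv.swap 0 2, fun {i j} => ?_⟩⟩
  have hswap (k : Fin (m + 4)) : (Equiv.swap 0 2 k).val =
      if k.val = 0 then 2 else if k.val = 2 then 0 else k.val := by
    rw [Equiv.swap_apply_def]
    simp only [Fin.ext_iff, Fin.val_two, Fin.val_zero]
    split_ifs <;> simp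
  simp only [Cstar, SimpleGraph.fromRel_adj, cstarRel_three_iff (Fin.isLt _), lollipop_adj,
    ne_eq, Fin.ext_iff, hswap]
  have := i.isLt
  have := j.isLt
  split_ifs <;> lia

end Minimizer

theorem qmin_Cstar_min_small_general {V : Type*} [Fintype V] (n : ℕ) (hn4 : 4 ≤ n)
    (G : SimpleGraph V) (hcard : Fintype.card V = n)
    (hconn : G.Connected) (hnonbip : ¬ G.Colorable 2) :
    qmin (Cstar n 3 (n - 4)) ≤ qmin G ∧
      (qmin (Cstar n 3 (n - 4)) = qmin G ↔ Nonempty (G ≃g Cstar n 3 (n - 4))) := by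
  obtain ⟨m, rfl⟩ := Nat.exists_eq_add_of_le' hn4
  rw [Nat.add_sub_cancel]
  have := hconn.nonempty
  obtain ⟨H, e, x, hx0, hx, hxq⟩ := exists_iso_monotone_abs G hcard
  have hH : H.Connected := e.connected_iff.2 hconn
  have hnb : ¬ H.Colorable 2 := fun h => hnonbip (h.of_hom e.symm.toHom)
  obtain ⟨f⟩ := nonempty_lollipop_iso_cstar (m := m)
  refine ⟨?_, fun hq => ?_, fun ⟨g⟩ => (qmin_eq_of_iso g).symm⟩
  · rw [← qmin_eq_of_iso f, ← qmin_eq_of_iso e]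
    exact qmin_lollipop_le hH hnb hx0 hx hxq
  · rw [← qmin_eq_of_iso f, ← qmin_eq_of_iso e] at hq
    obtain rfl := eq_lollipop_of_qmin_eq hH hnb hx0 hx hxq hq
    exact ⟨e.symm.trans f⟩

/-- For `n ∈ {3γ-1, 3γ, 3γ+1}` (`γ ≥ 1`, `n ≥ 4`), among all connected nonbipartite
graphs of order `n` with domination number `γ`, the least `Q`-eigenvalue is minimized
uniquely by `C*_{3,n-4}`. -/
theorem qmin_Cstar_min_small
    {V : Type*} [Fintype V] (γ n : ℕ) (hγ : 1 ≤ γ) (hn4 : 4 ≤ n)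
    (hn : n = 3 * γ - 1 ∨ n = 3 * γ ∨ n = 3 * γ + 1)
    (G : SimpleGraph V) (hcard : Fintype.card V = n)
    (hconn : G.Connected) (hnonbip : ¬ G.Colorable 2)
    (hdom : dominationNumber G = γ) :
    qmin (Cstar n 3 (n - 4)) ≤ qmin G ∧
      (qmin (Cstar n 3 (n - 4)) = qmin G ↔ Nonempty (G ≃g Cstar n 3 (n - 4))) :=
  qmin_Cstar_min_small_general n hn4 G hcard hconn hnonbip
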